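/- Let G ⊆ ℂ be open. Let f₊ : {z ∈ G : Im z ≥ 0} → ℂ be continuous and holomorphic on {z ∈ G : Im z > 0}, and let f₋ : {z ∈ G : Im z ≤ 0} → ℂ be continuous and holomorphic on {z ∈ G : Im z < 0}. Define F : G → ℂ by F(z) = f₊(z) if Im z > 0 and F(z) = f₋(z) if Im z ≤ 0. Then for every test function φ on ℂ whose support is a compact subset of G, ∫_ℂ F(z)·(∂̄φ)(z) d²z = −(i/2)·∫_{x ∈ ℝ, x ∈ G} (f₊(x) − f₋(x))·φ(x) dx. (Equivalently, ∂̄F(x+iy) = (i/2)(f(x+i0) − f(x−i0))·δ(y) in the sense of distributions.) -/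

import Mathlib

open MeasureTheory

/-- The complex conjugate (Wirtinger) derivative `∂̄φ = (1/2)(∂φ/∂x + i ∂φ/∂y)`. -/
noncomputable def wirtingerBar (φ : ℂ → ℂ) (z : ℂ) : ℂ :=
  (1 / 2) * (fderiv ℝ φ z 1 + Complex.I * fderiv ℝ φ z Complex.I)

open Complex Set in
/-- Fubini's theorem for a continuous function on a rectangle in `ℂ`. -/
theorem setIntegral_Ioc_reProdIm_Ioc {a b c d : ℝ} (hab : a ≤ b) (hcd : c ≤ d) {h : ℂ → ℂ}
    (hh : ContinuousOn h (uIcc a b ×ℂ uIcc c d)) :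
    IntegrableOn h (Ioc a b ×ℂ Ioc c d) ∧
      ∫ z in Ioc a b ×ℂ Ioc c d, h z = ∫ x : ℝ in a..b, ∫ y : ℝ in c..d, h (x + y * I) := by
  have hint : IntegrableOn h (Ioc a b ×ℂ Ioc c d) := by
    refine (hh.integrableOn_compact (isCompact_uIcc.reProdIm isCompact_uIcc)).mono_set ?_
    rw [uIcc_of_le hab, uIcc_of_le hcd]
    exact fun z hz => ⟨Ioc_subset_Icc_self hz.1, Ioc_subset_Icc_self hz.2⟩
  have hset : Ioc a b ×ℂ Ioc c d = measurableEquivRealProd ⁻¹' (Ioc a b ×ˢ Ioc c d) := rfl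
  have hcomp : h = fun z => (fun p : ℝ × ℝ => h (p.1 + p.2 * I)) (measurableEquivRealProd z) := by
    funext z
    simp [measurableEquivRealProd, re_add_im]
  refine ⟨hint, ?_⟩
  have hemb := measurableEquivRealProd.measurableEmbedding
  have hint' : IntegrableOn (fun p : ℝ × ℝ => h (p.1 + p.2 * I)) (Ioc a b ×ˢ Ioc c d) := by
    rw [← volume_preserving_equiv_real_prod.integrableOn_comp_preimage hemb]
    rw [hset, hcomp] at hint
    exact hint
  rw [intervalIntegral.integral_of_le hab]
  simp_rw [intervalIntegral.integral_of_le hcd]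
  rw [← setIntegral_prod (fun p : ℝ × ℝ => h (p.1 + p.2 * I)) hint', ← Measure.volume_eq_prod,
    ← volume_preserving_equiv_real_prod.setIntegral_preimage_emb hemb]
  rw [hset]
  conv_lhs => rw [hcomp]

/-- The product of a function continuous on `G ∩ S` and a continuous function supported in the
open set `G` is continuous on `S`. -/
theorem ContinuousOn.mul_of_tsupport_subset {X : Type*} [TopologicalSpace X] {G S : Set X}
    (hG : IsOpen G) {f ψ : X → ℂ} (hf : ContinuousOn f (G ∩ S)) (hψ : Continuous ψ)
    (hsub : tsupport ψ ⊆ G) : ContinuousOn (fun z => f z * ψ z) S := by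
  intro z hz
  by_cases hzs : z ∈ tsupport ψ
  · have hGz : G ∈ nhds z := hG.mem_nhds (hsub hzs)
    have := hf z ⟨hsub hzs, hz⟩
    rw [ContinuousWithinAt, Set.inter_comm, nhdsWithin_inter_of_mem' (mem_nhdsWithin_of_mem_nhds hGz)]
      at this
    exact ContinuousWithinAt.mul this hψ.continuousWithinAt
  · have h0 : (fun z => f z * ψ z) =ᶠ[nhds z] fun _ => 0 := by
      filter_upwards [notMem_tsupport_iff_eventuallyEq.1 hzs] with y hy
      simp [hy]
    exact (continuousAt_const.congr h0.symm).continuousWithinAt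

theorem continuous_wirtingerBar {φ : ℂ → ℂ} (hφ : ContDiff ℝ (⊤ : ℕ∞) φ) :
    Continuous (wirtingerBar φ) := by
  have h : Continuous (fderiv ℝ φ) := hφ.continuous_fderiv (by simp)
  unfold wirtingerBar
  fun_prop

theorem tsupport_wirtingerBar_subset (φ : ℂ → ℂ) : tsupport (wirtingerBar φ) ⊆ tsupport φ := by
  refine closure_minimal (fun z hz => ?_) (isClosed_tsupport φ)
  refine tsupport_fderiv_subset ℝ (subset_tsupport _ fun h => hz ?_)
  simp [wirtingerBar, h]

open Complex Set in
/-- Green's formula for the product of a holomorphic function and a test function on a rectangle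
whose vertical sides avoid the support of the test function. -/
theorem integral_rect_mul_wirtingerBar {G : Set ℂ} (hG : IsOpen G) {f φ : ℂ → ℂ} {R c d : ℝ}
    (hR : 0 ≤ R) (hcd : c ≤ d)
    (hf : ContinuousOn f (G ∩ im ⁻¹' Icc c d)) (hd : DifferentiableOn ℂ f (G ∩ im ⁻¹' Ioo c d))
    (hφ : ContDiff ℝ (⊤ : ℕ∞) φ) (hsub : tsupport φ ⊆ G)
    (hzero : ∀ z : ℂ, R ≤ |z.re| → φ z = 0) :
    IntegrableOn (fun z => f z * wirtingerBar φ z) (Ioc (-R) R ×ℂ Ioc c d) ∧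
      2 * I * ∫ z in Ioc (-R) R ×ℂ Ioc c d, f z * wirtingerBar φ z =
        (∫ x : ℝ in -R..R, f (x + c * I) * φ (x + c * I)) -
          ∫ x : ℝ in -R..R, f (x + d * I) * φ (x + d * I) := by
  have hstrip : uIcc (-R) R ×ℂ uIcc c d ⊆ im ⁻¹' Icc c d := by
    rw [uIcc_of_le hcd]
    exact fun z hz => hz.2
  have hcw : ContinuousOn (fun z => f z * wirtingerBar φ z) (uIcc (-R) R ×ℂ uIcc c d) :=
    (hf.mul_of_tsupport_subset hG (continuous_wirtingerBar hφ)
      ((tsupport_wirtingerBar_subset φ).trans hsub)).mono hstrip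
  obtain ⟨hint, heq⟩ := setIntegral_Ioc_reProdIm_Ioc (neg_le_self hR) hcd hcw
  refine ⟨hint, ?_⟩
  let f' : ℂ → ℂ →L[ℝ] ℂ := fun z =>
    f z • fderiv ℝ φ z + φ z • (fderiv ℂ f z).restrictScalars ℝ
  have hf' (z : ℂ) : I • f' z 1 - f' z I = 2 * I * (f z * wirtingerBar φ z) := by
    have h1 : fderiv ℂ f z I = I * fderiv ℂ f z 1 := by
      rw [← smul_eq_mul, ← map_smul, smul_eq_mul, mul_one]
    simp only [f', add_apply, smul_apply,
      ContinuousLinearMap.coe_restrictScalars', smul_eq_mul, wirtingerBar, h1]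
    linear_combination (-f z * fderiv ℝ φ z I) * I_sq
  have hderiv (z : ℂ) (hz : z.im ∈ Ioo c d) :
      HasFDerivAt (fun z => f z * φ z) (f' z) z := by
    by_cases hzs : z ∈ tsupport φ
    · have hnhds : G ∩ im ⁻¹' Ioo c d ∈ nhds z :=
        (hG.inter (isOpen_Ioo.preimage continuous_im)).mem_nhds ⟨hsub hzs, hz⟩
      exact ((hd.differentiableAt hnhds).hasFDerivAt.restrictScalars ℝ).mul
        (hφ.differentiable (by simp) z).hasFDerivAt
    · have h0 := notMem_tsupport_iff_eventuallyEq.1 hzs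
      have hf0 : f' z = 0 := by
        ext
        simp [f', h0.eq_of_nhds, h0.fderiv_eq]
      rw [hf0]
      refine (hasFDerivAt_const (0 : ℂ) z).congr_of_eventuallyEq ?_
      filter_upwards [h0] with y hy
      simp [hy]
  have key := integral_boundary_rect_of_continuousOn_of_hasFDerivAt_real
    (fun z => f z * φ z) f' (-R + c * I) (R + d * I)
    (by simpa using (hf.mul_of_tsupport_subset hG hφ.continuous hsub).mono hstrip)
    (fun z hz => hderiv z (by simpa [hcd] using hz.2))
    (by
      simp only [hf']
      refine ContinuousOn.integrableOn_compact (isCompact_uIcc.reProdIm isCompact_uIcc) ?_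
      simpa using hcw.const_mul (2 * I))
  have hr (y : ℝ) : φ (R + y * I) = 0 := hzero _ (by simp [le_abs_self])
  have hl (y : ℝ) : φ (-R + y * I) = 0 := hzero _ (by simp [le_abs_self])
  simp only [hf', intervalIntegral.integral_const_mul] at key
  simp [hr, hl] at key
  rw [heq, ← key]

/-- If `f₊` is continuous on `{z ∈ G : Im z ≥ 0}` and holomorphic on
`{z ∈ G : Im z > 0}`, `f₋` is continuous on `{z ∈ G : Im z ≤ 0}` and holomorphic on
`{z ∈ G : Im z < 0}`, and `F = f₊` on `{Im > 0}`, `F = f₋` on `{Im ≤ 0}`, then for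
every test function `φ` with compact support contained in `G`,
`∫ F ∂̄φ d²z = -(i/2) ∫_{x ∈ ℝ ∩ G} (f₊(x) - f₋(x)) φ(x) dx`, i.e.
`∂̄F(x+iy) = (i/2)(f(x+i0) - f(x-i0)) δ(y)` as distributions. -/
theorem wirtingerBar_of_boundary_jump
    (G : Set ℂ) (hG : IsOpen G) (fp fm : ℂ → ℂ)
    (hfp_cont : ContinuousOn fp {z | z ∈ G ∧ 0 ≤ z.im})
    (hfp_holo : DifferentiableOn ℂ fp {z | z ∈ G ∧ 0 < z.im})
    (hfm_cont : ContinuousOn fm {z | z ∈ G ∧ z.im ≤ 0})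
    (hfm_holo : DifferentiableOn ℂ fm {z | z ∈ G ∧ z.im < 0})
    (F : ℂ → ℂ) (hF : ∀ z, F z = if 0 < z.im then fp z else fm z)
    (φ : ℂ → ℂ) (hφ : ContDiff ℝ (⊤ : ℕ∞) φ) (hsupp : HasCompactSupport φ)
    (hsub : tsupport φ ⊆ G) :
    ∫ z : ℂ, F z * wirtingerBar φ z =
      -(Complex.I / 2) * ∫ x in {x : ℝ | (x : ℂ) ∈ G}, (fp x - fm x) * φ x := by
  obtain ⟨R, hR0, hR⟩ := hsupp.isBounded.subset_ball_lt 0 (0 : ℂ)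
  have hzero (z : ℂ) (hz : R ≤ ‖z‖) : z ∉ tsupport φ := fun h =>
    (mem_ball_zero_iff.1 (hR h)).not_ge hz
  have hzero_re (z : ℂ) (hz : R ≤ |z.re|) : φ z = 0 :=
    image_eq_zero_of_notMem_tsupport (hzero z (hz.trans (Complex.abs_re_le_norm z)))
  have hzero_im (z : ℂ) (hz : R ≤ |z.im|) : φ z = 0 :=
    image_eq_zero_of_notMem_tsupport (hzero z (hz.trans (Complex.abs_im_le_norm z)))
  obtain ⟨hint_p, heq_p⟩ := integral_rect_mul_wirtingerBar hG (f := fp) (c := 0) (d := R)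
    hR0.le hR0.le (hfp_cont.mono fun z hz => ⟨hz.1, hz.2.1⟩)
    (hfp_holo.mono fun z hz => ⟨hz.1, hz.2.1⟩) hφ hsub hzero_re
  obtain ⟨hint_m, heq_m⟩ := integral_rect_mul_wirtingerBar hG (f := fm) (c := -R) (d := 0)
    hR0.le (neg_nonpos.2 hR0.le) (hfm_cont.mono fun z hz => ⟨hz.1, hz.2.2⟩)
    (hfm_holo.mono fun z hz => ⟨hz.1, hz.2.2⟩) hφ hsub hzero_re
  have htop (x : ℝ) : φ (x + R * Complex.I) = 0 := hzero_im _ (by simp [le_abs_self])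
  have hbot (x : ℝ) : φ (x + -(R * Complex.I)) = 0 := hzero_im _ (by simp [le_abs_self])
  simp only [Complex.ofReal_zero, zero_mul, add_zero, htop, mul_zero,
    intervalIntegral.integral_zero, sub_zero] at heq_p
  simp only [Complex.ofReal_zero, zero_mul, add_zero, Complex.ofReal_neg, neg_mul, hbot, mul_zero,
    intervalIntegral.integral_zero, zero_sub] at heq_m
  let U := Set.Ioc (-R) R ×ℂ Set.Ioc 0 R
  let L := Set.Ioc (-R) R ×ℂ Set.Ioc (-R) 0
  have hU : MeasurableSet U := (Complex.measurable_re measurableSet_Ioc).inter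
    (Complex.measurable_im measurableSet_Ioc)
  have hL : MeasurableSet L := (Complex.measurable_re measurableSet_Ioc).inter
    (Complex.measurable_im measurableSet_Ioc)
  have hUF : Set.EqOn (fun z => F z * wirtingerBar φ z) (fun z => fp z * wirtingerBar φ z) U := by
    intro z hz
    simp [hF, hz.2.1]
  have hLF : Set.EqOn (fun z => F z * wirtingerBar φ z) (fun z => fm z * wirtingerBar φ z) L := by
    intro z hz
    simp [hF, hz.2.2.not_gt]
  have hUL : Disjoint U L := Set.disjoint_left.2 fun z hz hz' => hz'.2.2.not_gt hz.2.1
  have hcover (z : ℂ) (hz : z ∉ U ∪ L) : F z * wirtingerBar φ z = 0 := by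
    by_cases hzs : z ∈ tsupport φ
    · have hzR := mem_ball_zero_iff.1 (hR hzs)
      have hre := abs_lt.1 ((Complex.abs_re_le_norm z).trans_lt hzR)
      have him := abs_lt.1 ((Complex.abs_im_le_norm z).trans_lt hzR)
      refine absurd ?_ hz
      rcases lt_or_ge 0 z.im with h | h
      · exact Or.inl ⟨⟨hre.1, hre.2.le⟩, h, him.2.le⟩
      · exact Or.inr ⟨⟨hre.1, hre.2.le⟩, him.1, h⟩
    · rw [image_eq_zero_of_notMem_tsupport (fun h => hzs (tsupport_wirtingerBar_subset φ h)),
        mul_zero]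
  have hleft : ∫ z : ℂ, F z * wirtingerBar φ z =
      (∫ z in U, fp z * wirtingerBar φ z) + ∫ z in L, fm z * wirtingerBar φ z := by
    rw [← setIntegral_eq_integral_of_forall_compl_eq_zero hcover,
      setIntegral_union hUL hL (hint_p.congr_fun hUF.symm hU) (hint_m.congr_fun hLF.symm hL),
      setIntegral_congr_fun hU hUF, setIntegral_congr_fun hL hLF]
  have hreal {f : ℂ → ℂ} (hf : ContinuousOn f (G ∩ {z | z.im = 0})) :
      IntervalIntegrable (fun x : ℝ => f x * φ x) volume (-R) R :=
    ((hf.mul_of_tsupport_subset hG hφ.continuous hsub).comp_continuous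
      Complex.continuous_ofReal fun x => Complex.ofReal_im x).intervalIntegrable _ _
  have hright : ∫ x in {x : ℝ | (x : ℂ) ∈ G}, (fp x - fm x) * φ x =
      (∫ x : ℝ in -R..R, fp x * φ x) - ∫ x : ℝ in -R..R, fm x * φ x := by
    rw [← intervalIntegral.integral_sub
      (hreal (hfp_cont.mono fun z hz => ⟨hz.1, hz.2.ge⟩))
      (hreal (hfm_cont.mono fun z hz => ⟨hz.1, hz.2.le⟩)),
      intervalIntegral.integral_of_le (neg_le_self hR0.le),
      setIntegral_eq_integral_of_forall_compl_eq_zero,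
      setIntegral_eq_integral_of_forall_compl_eq_zero]
    · simp only [sub_mul]
    · intro x hx
      have hxR : R ≤ |x| := by
        contrapose! hx
        exact ⟨(abs_lt.1 hx).1, (abs_lt.1 hx).2.le⟩
      simp [hzero_re x (by simpa using hxR)]
    · intro x hx
      rw [image_eq_zero_of_notMem_tsupport (fun h => hx (hsub h)), mul_zero]
  rw [hleft, hright]
  linear_combination (-Complex.I / 2) * (heq_p + heq_m) +
    ((∫ z in U, fp z * wirtingerBar φ z) + ∫ z in L, fm z * wirtingerBar φ z) * Complex.I_sq
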